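/- For every T > 0 and every nonzero k ∈ ℤ², T / |1 − Ĥ_T(k)| ≤ 4 / (1 − exp(−1/T)); equivalently |1 − Ĥ_T(k)| ≥ (T/4)·(1 − e^{−1/T}). (This is the bound ‖L_T^{-1}‖_{H^s₀} ≤ 4/(1 − e^{−1/T}) for the operator L_T whose Fourier representation is multiplication by (1 − Ĥ_T(k))/T.) -/

import Mathlib

open MeasureTheory Real

/-- The zeroth-order Bessel function `J⁰(k) = (1/π) ∫₀^π cos(k cos θ) dθ`. -/
noncomputable def J0 (k : ℝ) : ℝ :=
  (1 / Real.pi) * ∫ θ in (0:ℝ)..Real.pi, Real.cos (k * Real.cos θ)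

/-- The Euclidean norm of `k ∈ ℤ²`. -/
noncomputable def eNorm (k : ℤ × ℤ) : ℝ :=
  Real.sqrt ((k.1 : ℝ) ^ 2 + (k.2 : ℝ) ^ 2)

/-- The Fourier multiplier `Ĥ_T(k) = (2/T) ∫₀^∞ (J⁰(‖k‖u))² e^{-u²/T} u du`. -/
noncomputable def Hhat (T : ℝ) (k : ℤ × ℤ) : ℝ :=
  (2 / T) * ∫ u in Set.Ioi (0:ℝ), (J0 (eNorm k * u)) ^ 2 * Real.exp (-u ^ 2 / T) * u

open Set Filter Topology

theorem cos_le_one_sub_sq_add_pow_four (x : ℝ) : cos x ≤ 1 - x ^ 2 / 2 + x ^ 4 / 24 := by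
  wlog hx : 0 ≤ x generalizing x
  · have h := this (-x) (by linarith)
    rw [cos_neg] at h
    linarith [h, show (-x) ^ 2 = x ^ 2 by ring, show (-x) ^ 4 = x ^ 4 by ring]
  let f (t : ℝ) : ℝ := 1 - t ^ 2 / 2 + t ^ 4 / 24 - cos t
  have hderiv (t : ℝ) : HasDerivAt f (sin t - (t - t ^ 3 / 6)) t := by
    have h := (((hasDerivAt_pow 2 t).div_const 2).const_sub 1).add
      ((hasDerivAt_pow 4 t).div_const 24) |>.sub (hasDerivAt_cos t)
    refine h.congr_deriv ?_
    norm_num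
    ring
  have hmono : MonotoneOn f (Ici 0) := by
    refine monotoneOn_of_hasDerivWithinAt_nonneg (convex_Ici 0)
      (fun t _ => (hderiv t).continuousAt.continuousWithinAt)
      (fun t _ => (hderiv t).hasDerivWithinAt) fun t ht => ?_
    rw [interior_Ici] at ht
    linarith [sin_ge_sub_cube ht.le]
  have h := hmono self_mem_Ici hx hx
  simp only [f, cos_zero] at h
  linarith

/-- Minus the derivative of `J0`, i.e. the first-order Bessel function. -/
noncomputable def J1 (x : ℝ) : ℝ :=
  (1 / π) * ∫ θ in (0 : ℝ)..π, cos θ * sin (x * cos θ)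

theorem hasDerivAt_J0 (x : ℝ) : HasDerivAt J0 (-J1 x) x := by
  have h := (intervalIntegral.hasDerivAt_integral_of_dominated_loc_of_deriv_le (μ := volume)
    (a := 0) (b := π) (F := fun x θ => cos (x * cos θ))
    (F' := fun x θ => -(cos θ * sin (x * cos θ))) (x₀ := x) (s := univ) (bound := fun _ => 1)
    univ_mem (.of_forall fun y =>
      (by fun_prop : Continuous fun θ => cos (y * cos θ)).aestronglyMeasurable)
    ((by fun_prop : Continuous fun θ => cos (x * cos θ)).intervalIntegrable _ _)
    (by fun_prop : Continuous fun θ => -(cos θ * sin (x * cos θ))).aestronglyMeasurable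
    (.of_forall fun θ _ y _ => ?_) intervalIntegrable_const
    (.of_forall fun θ _ y _ => ?_)).2.const_mul (1 / π)
  · refine h.congr_deriv ?_
    rw [intervalIntegral.integral_neg, J1]
    ring
  · rw [norm_neg, norm_mul]
    exact mul_le_one₀ (abs_cos_le_one _) (norm_nonneg _) (abs_sin_le_one _)
  · refine ((hasDerivAt_mul_const (cos θ)).cos).congr_deriv ?_
    ring

theorem hasDerivAt_J1 (x : ℝ) :
    HasDerivAt J1 ((1 / π) * ∫ θ in (0 : ℝ)..π, cos θ ^ 2 * cos (x * cos θ)) x := by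
  refine (intervalIntegral.hasDerivAt_integral_of_dominated_loc_of_deriv_le (μ := volume)
    (a := 0) (b := π) (F := fun x θ => cos θ * sin (x * cos θ))
    (F' := fun x θ => cos θ ^ 2 * cos (x * cos θ)) (x₀ := x) (s := univ) (bound := fun _ => 1)
    univ_mem (.of_forall fun y =>
      (by fun_prop : Continuous fun θ => cos θ * sin (y * cos θ)).aestronglyMeasurable)
    ((by fun_prop : Continuous fun θ => cos θ * sin (x * cos θ)).intervalIntegrable _ _)
    (by fun_prop : Continuous fun θ => cos θ ^ 2 * cos (x * cos θ)).aestronglyMeasurable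
    (.of_forall fun θ _ y _ => ?_) intervalIntegrable_const
    (.of_forall fun θ _ y _ => ?_)).2.const_mul (1 / π)
  · rw [norm_mul, norm_pow]
    exact mul_le_one₀ (pow_le_one₀ (norm_nonneg _) (abs_cos_le_one _)) (norm_nonneg _)
      (abs_cos_le_one _)
  · refine (((hasDerivAt_mul_const (cos θ)).sin).const_mul (cos θ)).congr_deriv ?_
    ring

/-- The Bessel differential equation, written as `x J₁' = x J₀ - J₁`. -/
theorem mul_integral_cos_sq_mul_cos (x : ℝ) :
    x * ((1 / π) * ∫ θ in (0 : ℝ)..π, cos θ ^ 2 * cos (x * cos θ)) = x * J0 x - J1 x := by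
  have hd (θ : ℝ) : HasDerivAt (fun θ => sin θ * sin (x * cos θ))
      (cos θ * sin (x * cos θ) - x * cos (x * cos θ) + x * (cos θ ^ 2 * cos (x * cos θ))) θ := by
    refine ((hasDerivAt_sin θ).mul ((hasDerivAt_cos θ).const_mul x).sin).congr_deriv ?_
    linear_combination (-x * cos (x * cos θ)) * sin_sq_add_cos_sq θ
  have h1 : IntervalIntegrable (fun θ => cos θ * sin (x * cos θ)) volume 0 π :=
    (by fun_prop : Continuous _).intervalIntegrable _ _
  have h2 : IntervalIntegrable (fun θ => x * cos (x * cos θ)) volume 0 π :=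
    (by fun_prop : Continuous _).intervalIntegrable _ _
  have h3 : IntervalIntegrable (fun θ => x * (cos θ ^ 2 * cos (x * cos θ))) volume 0 π :=
    (by fun_prop : Continuous _).intervalIntegrable _ _
  have h := intervalIntegral.integral_eq_sub_of_hasDerivAt (a := 0) (b := π)
    (fun θ _ => hd θ) ((h1.sub h2).add h3)
  rw [intervalIntegral.integral_add (h1.sub h2) h3, intervalIntegral.integral_sub h1 h2,
    intervalIntegral.integral_const_mul, intervalIntegral.integral_const_mul] at h
  simp only [sin_pi, sin_zero, zero_mul, sub_zero] at h
  rw [J0, J1]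
  linear_combination (1 / π) * h

theorem antitoneOn_J0_sq_add_J1_sq : AntitoneOn (fun x => J0 x ^ 2 + J1 x ^ 2) (Ioi 0) := by
  have hd (x : ℝ) := ((hasDerivAt_J0 x).pow 2).add ((hasDerivAt_J1 x).pow 2)
  refine antitoneOn_of_hasDerivWithinAt_nonpos (convex_Ioi 0)
    (fun x _ => (hd x).continuousAt.continuousWithinAt)
    (fun x _ => (hd x).hasDerivWithinAt) fun x hx => ?_
  rw [interior_Ioi, mem_Ioi] at hx
  have h := mul_integral_cos_sq_mul_cos x
  set K := (1 / π) * ∫ θ in (0 : ℝ)..π, cos θ ^ 2 * cos (x * cos θ)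
  have hK : K = J0 x - J1 x / x := by
    field_simp
    linarith
  rw [hK]
  have : 0 ≤ J1 x ^ 2 / x := by positivity
  norm_num
  linarith [show 2 * J1 x * (J0 x - J1 x / x) = 2 * (J0 x * J1 x) - 2 * (J1 x ^ 2 / x) by ring]

theorem continuous_J0 : Continuous J0 :=
  continuous_iff_continuousAt.2 fun x => (hasDerivAt_J0 x).continuousAt

theorem integral_cos_sq_zero_pi : ∫ θ in (0 : ℝ)..π, cos θ ^ 2 = π / 2 := by
  simp [integral_cos_sq]

theorem integral_cos_pow_four_zero_pi : ∫ θ in (0 : ℝ)..π, cos θ ^ 4 = 3 * π / 8 := by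
  rw [integral_cos_pow 2, integral_cos_sq_zero_pi]
  norm_num
  ring

theorem J0_le (x : ℝ) : J0 x ≤ 1 - x ^ 2 / 4 + x ^ 4 / 64 := by
  have h : ∫ θ in (0 : ℝ)..π, cos (x * cos θ) ≤
      ∫ θ in (0 : ℝ)..π, (1 - x ^ 2 / 2 * cos θ ^ 2 + x ^ 4 / 24 * cos θ ^ 4) :=
    intervalIntegral.integral_mono_on pi_pos.le
      ((by fun_prop : Continuous _).intervalIntegrable _ _)
      ((by fun_prop : Continuous _).intervalIntegrable _ _) fun θ _ => by
        linarith [cos_le_one_sub_sq_add_pow_four (x * cos θ), mul_pow x (cos θ) 2,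
          mul_pow x (cos θ) 4]
  rw [intervalIntegral.integral_add, intervalIntegral.integral_sub,
    intervalIntegral.integral_const_mul, intervalIntegral.integral_const_mul,
    integral_cos_sq_zero_pi, integral_cos_pow_four_zero_pi, intervalIntegral.integral_const] at h
  · rw [J0, one_div, inv_mul_le_iff₀ pi_pos]
    refine h.trans_eq ?_
    simp
    ring
  all_goals exact (by fun_prop : Continuous _).intervalIntegrable _ _

theorem one_sub_sq_div_four_le_J0 (x : ℝ) : 1 - x ^ 2 / 4 ≤ J0 x := by
  have h : ∫ θ in (0 : ℝ)..π, (1 - x ^ 2 / 2 * cos θ ^ 2) ≤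
      ∫ θ in (0 : ℝ)..π, cos (x * cos θ) :=
    intervalIntegral.integral_mono_on pi_pos.le
      ((by fun_prop : Continuous _).intervalIntegrable _ _)
      ((by fun_prop : Continuous _).intervalIntegrable _ _) fun θ _ => by
        linarith [one_sub_sq_div_two_le_cos (x := x * cos θ), mul_pow x (cos θ) 2]
  rw [intervalIntegral.integral_sub, intervalIntegral.integral_const_mul,
    integral_cos_sq_zero_pi, intervalIntegral.integral_const] at h
  · rw [J0, one_div, le_inv_mul_iff₀ pi_pos]
    refine Eq.trans_le ?_ h
    simp
    ring
  all_goals exact (by fun_prop : Continuous _).intervalIntegrable _ _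

theorem abs_J1_le (x : ℝ) : |J1 x| ≤ 17 / 24 := by
  have h : ‖∫ θ in (0 : ℝ)..π, cos θ * sin (x * cos θ)‖ ≤
      ∫ θ in (0 : ℝ)..π, (3 / 4 * cos θ ^ 2 + 1 / 3) := by
    refine intervalIntegral.norm_integral_le_of_norm_le pi_pos.le (.of_forall fun θ _ => ?_)
      ((by fun_prop : Continuous _).intervalIntegrable _ _)
    rw [norm_mul, norm_eq_abs, norm_eq_abs, ← sq_abs (cos θ)]
    have h1 := mul_le_mul_of_nonneg_left (abs_sin_le_one (x * cos θ)) (abs_nonneg (cos θ))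
    nlinarith [sq_nonneg (3 * |cos θ| - 2)]
  rw [intervalIntegral.integral_add, intervalIntegral.integral_const_mul,
    integral_cos_sq_zero_pi, intervalIntegral.integral_const, norm_eq_abs] at h
  · rw [J1, abs_mul, abs_of_pos (by positivity), one_div, inv_mul_le_iff₀ pi_pos]
    refine h.trans_eq ?_
    simp
    ring
  all_goals exact (by fun_prop : Continuous _).intervalIntegrable _ _

theorem min_sq_one_div_four_le_one_sub_J0_sq {x : ℝ} (hx : 0 ≤ x) :
    min (x ^ 2) 1 / 4 ≤ 1 - J0 x ^ 2 := by
  have hu := J0_le x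
  have hl := one_sub_sq_div_four_le_J0 x
  rcases le_total x 2 with h2 | h2
  · have hs : x ^ 2 ≤ 4 := by nlinarith
    have hs0 : 0 ≤ x ^ 2 := by positivity
    have hx4 : x ^ 4 = (x ^ 2) ^ 2 := by ring
    rw [hx4] at hu
    generalize x ^ 2 = s at *
    have hsq : J0 x ^ 2 ≤ (1 - s / 4 + s ^ 2 / 64) ^ 2 :=
      pow_le_pow_left₀ (by linarith) hu 2
    have hP : 1 - s / 4 + s ^ 2 / 64 = (1 - s / 8) ^ 2 := by ring
    rw [hP] at hsq
    rcases le_total s 1 with h1 | h1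
    · have : (1 - s / 8) ^ 2 ≤ 1 - 15 / 64 * s := by nlinarith
      have : ((1 - s / 8) ^ 2) ^ 2 ≤ (1 - 15 / 64 * s) ^ 2 :=
        pow_le_pow_left₀ (by positivity) this 2
      have := min_le_left s 1
      nlinarith
    · have : (1 - s / 8) ^ 2 ≤ (7 / 8) ^ 2 := pow_le_pow_left₀ (by linarith) (by linarith) 2
      have : ((1 - s / 8) ^ 2) ^ 2 ≤ ((7 / 8) ^ 2) ^ 2 :=
        pow_le_pow_left₀ (by positivity) this 2
      have := min_le_right s 1
      linarith
  · have h := antitoneOn_J0_sq_add_J1_sq (a := 2) (b := x) (by norm_num [mem_Ioi])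
      (by simp only [mem_Ioi]; linarith) h2
    have hJ1 : J1 2 ^ 2 ≤ (17 / 24) ^ 2 := sq_le_sq' (neg_le_of_abs_le (abs_J1_le 2))
      (le_of_abs_le (abs_J1_le 2))
    have hu2 := J0_le 2
    have hl2 := one_sub_sq_div_four_le_J0 2
    norm_num at hu2 hl2
    have : J0 2 ^ 2 ≤ (1 / 4) ^ 2 := pow_le_pow_left₀ hl2 hu2 2
    have := min_le_right (x ^ 2) 1
    simp only at h
    nlinarith [sq_nonneg (J1 x)]

theorem hasDerivAt_exp_neg_sq_div {T : ℝ} (hT : 0 < T) (u : ℝ) :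
    HasDerivAt (fun u => -(T / 2) * exp (-u ^ 2 / T)) (exp (-u ^ 2 / T) * u) u := by
  refine ((((hasDerivAt_pow 2 u).neg.div_const T).exp).const_mul (-(T / 2))).congr_deriv ?_
  simp
  field_simp

theorem tendsto_exp_neg_sq_div {T : ℝ} (hT : 0 < T) :
    Tendsto (fun u : ℝ => -(T / 2) * exp (-u ^ 2 / T)) atTop (𝓝 0) := by
  have h : Tendsto (fun u : ℝ => -u ^ 2 / T) atTop atBot :=
    (tendsto_neg_atTop_atBot.comp (tendsto_pow_atTop two_ne_zero)).atBot_div_const hT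
  simpa using (tendsto_exp_atBot.comp h).const_mul (-(T / 2))

theorem integrableOn_exp_neg_sq_div_mul {T a : ℝ} (hT : 0 < T) (ha : 0 ≤ a) :
    IntegrableOn (fun u : ℝ => exp (-u ^ 2 / T) * u) (Ioi a) :=
  integrableOn_Ioi_deriv_of_nonneg' (fun u _ => hasDerivAt_exp_neg_sq_div hT u)
    (fun _ hu => mul_nonneg (exp_pos _).le (ha.trans hu.le)) (tendsto_exp_neg_sq_div hT)

theorem integral_Ioi_exp_neg_sq_div_mul {T a : ℝ} (hT : 0 < T) (ha : 0 ≤ a) :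
    ∫ u in Ioi a, exp (-u ^ 2 / T) * u = T / 2 * exp (-a ^ 2 / T) := by
  rw [integral_Ioi_of_hasDerivAt_of_tendsto' (fun u _ => hasDerivAt_exp_neg_sq_div hT u)
    (integrableOn_exp_neg_sq_div_mul hT ha) (tendsto_exp_neg_sq_div hT)]
  ring

theorem integrableOn_mul_exp_neg_sq_div_mul {T c : ℝ} (hT : 0 < T) {g : ℝ → ℝ}
    (hg : Continuous g) (hb : ∀ u, |g u| ≤ c) :
    IntegrableOn (fun u : ℝ => g u * (exp (-u ^ 2 / T) * u)) (Ioi 0) :=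
  (integrableOn_exp_neg_sq_div_mul hT le_rfl).bdd_mul hg.aestronglyMeasurable
    (.of_forall hb)

theorem abs_min_sq_one_le (u : ℝ) : |min (u ^ 2) 1| ≤ 1 := by
  rw [abs_of_nonneg (le_min (sq_nonneg u) zero_le_one)]
  exact min_le_right _ _

theorem integral_min_sq_one_mul_exp_neg_sq_div {T : ℝ} (hT : 0 < T) :
    ∫ u in Ioi (0 : ℝ), min (u ^ 2) 1 * (exp (-u ^ 2 / T) * u) =
      T ^ 2 / 2 * (1 - exp (-1 / T)) := by
  have hi : IntegrableOn (fun u : ℝ => min (u ^ 2) 1 * (exp (-u ^ 2 / T) * u)) (Ioi 0) :=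
    integrableOn_mul_exp_neg_sq_div_mul hT (by fun_prop) abs_min_sq_one_le
  rw [← Ioc_union_Ioi_eq_Ioi (zero_le_one' ℝ)] at hi ⊢
  rw [setIntegral_union (Ioc_disjoint_Ioi le_rfl) measurableSet_Ioi hi.left_of_union
    hi.right_of_union]
  have h1 : ∫ u in Ioi (1 : ℝ), min (u ^ 2) 1 * (exp (-u ^ 2 / T) * u) =
      T / 2 * exp (-1 / T) := by
    rw [setIntegral_congr_fun (g := fun u => exp (-u ^ 2 / T) * u) measurableSet_Ioi]
    · simpa using integral_Ioi_exp_neg_sq_div_mul hT zero_le_one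
    · intro u hu
      simp only
      rw [min_eq_right (one_le_pow₀ (le_of_lt hu)), one_mul]
  have hd (u : ℝ) : HasDerivAt (fun u => -(T / 2) * (u ^ 2 + T) * exp (-u ^ 2 / T))
      (u ^ 2 * (exp (-u ^ 2 / T) * u)) u := by
    refine (((((hasDerivAt_pow 2 u).add_const T).const_mul (-(T / 2))).mul
      ((hasDerivAt_pow 2 u).neg.div_const T).exp)).congr_deriv ?_
    simp
    field_simp
    ring
  have h0 : ∫ u in Ioc (0 : ℝ) 1, min (u ^ 2) 1 * (exp (-u ^ 2 / T) * u) =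
      T ^ 2 / 2 - T / 2 * (1 + T) * exp (-1 / T) := by
    rw [setIntegral_congr_fun (g := fun u => u ^ 2 * (exp (-u ^ 2 / T) * u)) measurableSet_Ioc,
      ← intervalIntegral.integral_of_le zero_le_one,
      intervalIntegral.integral_eq_sub_of_hasDerivAt (fun u _ => hd u)
        ((by fun_prop : Continuous _).intervalIntegrable _ _)]
    · simp
      ring
    · intro u hu
      simp only
      rw [min_eq_left (pow_le_one₀ hu.1.le hu.2)]
  rw [h0, h1]
  ring

theorem one_le_eNorm {k : ℤ × ℤ} (hk : k ≠ 0) : 1 ≤ eNorm k := by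
  rw [eNorm, one_le_sqrt]
  have h : 0 < k.1 ^ 2 + k.2 ^ 2 := by
    by_contra! h
    have h1 : k.1 = 0 := by nlinarith [sq_nonneg k.1, sq_nonneg k.2]
    have h2 : k.2 = 0 := by nlinarith [sq_nonneg k.1, sq_nonneg k.2]
    exact hk (Prod.ext h1 h2)
  exact_mod_cast h

theorem le_one_sub_Hhat {T : ℝ} (hT : 0 < T) {k : ℤ × ℤ} (hk : k ≠ 0) :
    T / 4 * (1 - exp (-1 / T)) ≤ 1 - Hhat T k := by
  have hr := one_le_eNorm hk
  have hJ {u : ℝ} (hu : 0 < u) : min (u ^ 2) 1 / 4 ≤ 1 - J0 (eNorm k * u) ^ 2 := by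
    refine le_trans ?_ (min_sq_one_div_four_le_one_sub_J0_sq (by positivity))
    have : u ≤ eNorm k * u := le_mul_of_one_le_left hu.le hr
    gcongr
  have hJcont : Continuous fun u => J0 (eNorm k * u) ^ 2 :=
    (continuous_J0.comp (continuous_const_mul _)).pow 2
  have hJint : IntegrableOn (fun u => J0 (eNorm k * u) ^ 2 * (exp (-u ^ 2 / T) * u)) (Ioi 0) := by
    refine (integrableOn_exp_neg_sq_div_mul hT le_rfl).bdd_mul (c := 1)
      hJcont.aestronglyMeasurable ((ae_restrict_mem measurableSet_Ioi).mono fun u hu => ?_)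
    have := hJ hu
    have : 0 ≤ min (u ^ 2) 1 := le_min (sq_nonneg u) zero_le_one
    rw [norm_eq_abs, abs_of_nonneg (sq_nonneg _)]
    linarith
  have hmin : IntegrableOn (fun u : ℝ => min (u ^ 2) 1 * (exp (-u ^ 2 / T) * u)) (Ioi 0) :=
    integrableOn_mul_exp_neg_sq_div_mul hT (by fun_prop) abs_min_sq_one_le
  have hbase := integrableOn_exp_neg_sq_div_mul hT (le_refl 0)
  have h := setIntegral_mono_on (hmin.const_mul (1 / 4)) (hbase.sub hJint) measurableSet_Ioi
    fun u hu => by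
      have := mul_le_mul_of_nonneg_right (hJ hu)
        (mul_nonneg (exp_pos (-u ^ 2 / T)).le (le_of_lt hu))
      simp only [Pi.sub_apply]
      linarith
  simp only [Pi.sub_apply] at h
  rw [integral_const_mul, integral_sub hbase hJint, integral_min_sq_one_mul_exp_neg_sq_div hT,
    integral_Ioi_exp_neg_sq_div_mul hT le_rfl] at h
  simp only [ne_eq, OfNat.ofNat_ne_zero, not_false_eq_true, zero_pow, neg_zero, zero_div, exp_zero,
    mul_one] at h
  rw [Hhat]
  simp only [mul_assoc]
  have h' := mul_le_mul_of_nonneg_left h (by positivity : 0 ≤ 2 / T)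
  refine (Eq.trans_le ?_ h').trans_eq ?_ <;> field_simp

/-- Bound `‖L_T⁻¹‖ ≤ 4/(1 - e^{-1/T})` in Fourier form. -/
theorem L_inv_bound (T : ℝ) (hT : 0 < T) (k : ℤ × ℤ) (hk : k ≠ 0) :
    T / |1 - Hhat T k| ≤ 4 / (1 - Real.exp (-1 / T)) := by
  have h := le_one_sub_Hhat hT hk
  have he : 0 < 1 - exp (-1 / T) :=
    sub_pos.2 (exp_lt_one_iff.2 (div_neg_of_neg_of_pos (by norm_num) hT))
  have hpos : 0 < 1 - Hhat T k := lt_of_lt_of_le (by positivity) h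
  rw [abs_of_pos hpos, div_le_div_iff₀ hpos he]
  linarith
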